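/- arXiv:2206.10874 — 3 statements merged into one kernel-verified Lean document; each statement's English description precedes it below -/
import Mathlib

section
/- Let g be an orientation-preserving homeomorphism of the circle S¹ that is topologically transitive (i.e., some orbit of g is dense in S¹). Then there is no lamination system 𝓛 on S¹ with g ∈ Aut(𝓛). -/
/-!
Let `g` be a transitive orientation-preserving homeomorphism and `I` an element of an invariant
lamination system, with dual `I*`.

Transitivity forbids wandering sets: by pigeonhole on the dense orbit, every nonempty open set
returns to itself under each nontrivial power of `g` (`recurrence`). Hence no nontrivial power maps
a good interval strictly inside itself (`not_strict_nested`); applied to an interval with one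
endpoint at a fixed point of the power, this excludes periodic points (`no_periodic`). A power
preserving a good interval permutes its endpoints, so that is excluded too, and no nontrivial power
maps a good interval into itself at all (`not_nested`).

Of the four unlinked configurations of `I` and `g ^ n I` with `n > 0`, two are nestings, so either
`I* ⊆ g ^ n I` or `I ⊆ g ^ n I*`. The second fails for a return time `n` of `I`, and the first fails
for a return time `m` of `I*`. Therefore `I ⊆ g ^ m I* ⊆ g ^ (m + n) I`, which is a nesting again: a
contradiction. The closedness axiom of lamination systems plays no role.
-/

open Set Filter Topology

namespace Veering

/-- The circle `S¹`: the unit additive circle `ℝ / ℤ`, with its standard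
circular order (`sbtw x y z` means the triple `(x,y,z)` is counterclockwise)
and its standard topology. -/
abbrev S1 : Type := UnitAddCircle

/-- A good open interval in `S¹`, recorded by its ordered pair of distinct
endpoints; its carrier is the set of points strictly counterclockwise
between them. -/
structure GoodInt : Type where
  a : S1
  b : S1
  ne : a ≠ b

namespace GoodInt

/-- The set of points of the good open interval `(a, b)`. -/
def carrier (I : GoodInt) : Set S1 := {z : S1 | sbtw I.a z I.b}

/-- The dual good interval `(u,v)* = (v,u)`. -/
def dual (I : GoodInt) : GoodInt := ⟨I.b, I.a, I.ne.symm⟩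

/-- The vertex set `v(ℓ(I)) = {a, b}` of the leaf determined by `I`. -/
def verts (I : GoodInt) : Set S1 := {I.a, I.b}

end GoodInt

/-- `I` and `J` represent the same leaf `ℓ(I) = {I, I*}`. -/
def SameLeaf (I J : GoodInt) : Prop := J = I ∨ J = I.dual

/-- A lamination system: a nonempty collection of good open intervals, closed
under duals, pairwise unlinked, and closed under unions of ascending chains
(when these unions are good intervals). -/
structure LamSys : Type where
  mem : Set GoodInt
  nonempty : mem.Nonempty
  dual_mem : ∀ I ∈ mem, GoodInt.dual I ∈ mem
  unlinked : ∀ I ∈ mem, ∀ J ∈ mem,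
      I.carrier ⊆ J.carrier ∨ I.dual.carrier ⊆ J.carrier ∨
      I.carrier ⊆ J.dual.carrier ∨ I.dual.carrier ⊆ J.dual.carrier
  chain_closed : ∀ c : ℕ → GoodInt, (∀ n, c n ∈ mem) →
      (∀ n, (c n).carrier ⊆ (c (n + 1)).carrier) →
      ∀ J : GoodInt, J.carrier = ⋃ n, (c n).carrier → J ∈ mem

namespace LamSys

/-- The endpoint set `E(𝓛)`: the union of the vertex sets of all leaves. -/
def E (L : LamSys) : Set S1 := ⋃ I ∈ L.mem, I.verts

/-- A gap of `L`: a set of pairwise disjoint elements of `L` such that every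
leaf of `L` lies on one of them. -/
def IsGap (L : LamSys) (G : Set GoodInt) : Prop :=
  G ⊆ L.mem ∧
  (∀ I ∈ G, ∀ J ∈ G, I ≠ J → Disjoint I.carrier J.carrier) ∧
  (∀ I ∈ L.mem, ∃ J ∈ G, I.carrier ⊆ J.carrier ∨ I.dual.carrier ⊆ J.carrier)

end LamSys

/-- The vertex set `v(𝒢) = S¹ \ ⋃ 𝒢` of a gap. -/
def gapVerts (G : Set GoodInt) : Set S1 := (⋃ I ∈ G, I.carrier)ᶜ

/-- `t` is a tip of `G`: an isolated point of the vertex set of `G`. -/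
def IsTipOf (t : S1) (G : Set GoodInt) : Prop :=
  t ∈ gapVerts G ∧ t ∉ closure (gapVerts G \ {t})

/-- A gap that is itself a leaf `{I, I*}`. -/
def IsLeafGap (G : Set GoodInt) : Prop := ∃ I : GoodInt, G = {I, I.dual}

/-- `G` is a crown with tip sequence `t : ℤ → S¹` and pivot `p`. -/
def IsCrownWith (G : Set GoodInt) (t : ℤ → S1) (p : S1) : Prop :=
  (∀ k, p ≠ t k) ∧ (∀ k, t k ≠ t (k + 1)) ∧
  G = {I : GoodInt | ∃ k : ℤ, I.a = t k ∧ I.b = t (k + 1)} ∧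
  gapVerts G = Set.range t ∪ {p}

/-- `G` is a crown. -/
def IsCrown (G : Set GoodInt) : Prop := ∃ t p, IsCrownWith G t p

/-- `p` is the pivot of the crown `G`. -/
def IsPivotOf (p : S1) (G : Set GoodInt) : Prop := ∃ t, IsCrownWith G t p

/-- A lamination system is quite full if every gap is an ideal polygon
(finitely many vertices) or a crown. -/
def LamSys.QuiteFull (L : LamSys) : Prop :=
  ∀ G : Set GoodInt, L.IsGap G → (gapVerts G).Finite ∨ IsCrown G

/-- `p` is a rainbow point of `L`: there is a strictly descending sequence of
elements of `L` whose intersection is `{p}`. -/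
def LamSys.IsRainbowPt (L : LamSys) (p : S1) : Prop :=
  ∃ I : ℕ → GoodInt, (∀ n, I n ∈ L.mem) ∧
    (∀ n, (I (n + 1)).carrier ⊂ (I n).carrier) ∧ (⋂ n, (I n).carrier) = {p}

/-- `L` is loose: distinct non-leaf gaps have disjoint vertex sets. -/
def LamSys.Loose (L : LamSys) : Prop :=
  ∀ G H : Set GoodInt, L.IsGap G → L.IsGap H → ¬ IsLeafGap G → ¬ IsLeafGap H →
    G ≠ H → Disjoint (gapVerts G) (gapVerts H)

/-- The sequence of leaves represented by `c` converges to the good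
interval `J`. -/
def SeqConv (c : ℕ → GoodInt) (J : GoodInt) : Prop :=
  ∃ d : ℕ → GoodInt, (∀ n, SameLeaf (c n) (d n)) ∧
    J.carrier ⊆ Filter.liminf (fun n => (d n).carrier) Filter.atTop ∧
    Filter.limsup (fun n => (d n).carrier) Filter.atTop ⊆ closure J.carrier

/-- `I ∈ L` admits an `I`-side sequence: a sequence of leaves of `L`, each
distinct from `ℓ(I)` and lying on `I`, converging to `I`.  (`I` is isolated
precisely when this fails.) -/
def LamSys.HasSideSeq (L : LamSys) (I : GoodInt) : Prop :=
  ∃ c : ℕ → GoodInt, (∀ n, c n ∈ L.mem) ∧ (∀ n, ¬ SameLeaf I (c n)) ∧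
    (∀ n, (c n).carrier ⊆ I.carrier ∨ (c n).dual.carrier ⊆ I.carrier) ∧
    SeqConv c I

/-- `L` is totally disconnected: every distinct pair is separated by a
non-leaf gap. -/
def LamSys.TotDisc (L : LamSys) : Prop :=
  ∀ I ∈ L.mem, ∀ J ∈ L.mem, I.carrier ⊂ J.dual.carrier →
    ∃ G : Set GoodInt, L.IsGap G ∧ ¬ IsLeafGap G ∧
      ∃ M ∈ G, ∃ N ∈ G, I.carrier ⊆ M.carrier ∧ J.carrier ⊆ N.carrier

/-- Gaps `G1` and `G2` interleave: every element of each contains exactly one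
vertex of the other. -/
def Interleave (G1 G2 : Set GoodInt) : Prop :=
  (∀ I ∈ G1, ∃! x : S1, x ∈ I.carrier ∩ gapVerts G2) ∧
  (∀ I ∈ G2, ∃! x : S1, x ∈ I.carrier ∩ gapVerts G1)

/-- A pseudo-fibered pair: two quite full, loose, strongly transverse
lamination systems. -/
structure PseudoFibered (L1 L2 : LamSys) : Prop where
  qf1 : L1.QuiteFull
  qf2 : L2.QuiteFull
  loose1 : L1.Loose
  loose2 : L2.Loose
  transverse : L1.E ∩ L2.E = ∅

/-- A veering pair: a pseudo-fibered pair in which every non-leaf gap of one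
system admits an interleaving gap in the other. -/
structure VeeringPair (L1 L2 : LamSys) extends PseudoFibered L1 L2 : Prop where
  inter1 : ∀ G : Set GoodInt, L1.IsGap G → ¬ IsLeafGap G →
    ∃ H : Set GoodInt, L2.IsGap H ∧ Interleave G H
  inter2 : ∀ G : Set GoodInt, L2.IsGap G → ¬ IsLeafGap G →
    ∃ H : Set GoodInt, L1.IsGap H ∧ Interleave G H

/-- An orientation-preserving homeomorphism of the circle: a bijection of
`S¹` which together with its inverse is continuous, and which preserves the
counterclockwise circular order. -/
def PosHomeo (g : Equiv.Perm S1) : Prop :=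
  Continuous ⇑g ∧ Continuous ⇑g.symm ∧
  ∀ x y z : S1, sbtw x y z → sbtw (g x) (g y) (g z)

/-- `g ∈ Aut(𝓛)`: an orientation-preserving homeomorphism of `S¹` mapping each
element of `𝓛` to an element of `𝓛`. -/
def LamSys.InAut (L : LamSys) (g : Equiv.Perm S1) : Prop :=
  PosHomeo g ∧ ∀ I ∈ L.mem, ∃ J ∈ L.mem, J.carrier = ⇑g '' I.carrier

/-- `g` maps the gap `G` onto itself. -/
def MapsGapOnto (g : Equiv.Perm S1) (G : Set GoodInt) : Prop :=
  (∀ I ∈ G, ∃ J ∈ G, J.carrier = ⇑g '' I.carrier) ∧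
  (∀ J ∈ G, ∃ I ∈ G, J.carrier = ⇑g '' I.carrier)

/-- The fixed point set of `g` on `S¹`. -/
def FixSet (g : Equiv.Perm S1) : Set S1 := {x : S1 | g x = x}

/-- The set of periodic points of `g` on `S¹`. -/
def PerSet (g : Equiv.Perm S1) : Set S1 := {x : S1 | ∃ n : ℕ, 0 < n ∧ (g ^ n) x = x}

/-- `p` is an attracting fixed point of `g`. -/
def IsAttractingFix (g : Equiv.Perm S1) (p : S1) : Prop :=
  g p = p ∧ ∃ I : GoodInt, I.carrier ∩ FixSet g = {p} ∧
    ⇑g '' closure I.carrier ⊆ I.carrier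

/-- `p` is a repelling fixed point of `g`. -/
def IsRepellingFix (g : Equiv.Perm S1) (p : S1) : Prop :=
  g p = p ∧ ∃ I : GoodInt, I.carrier ∩ FixSet g = {p} ∧
    I.carrier ⊆ ⇑g '' closure I.carrier

/-- `g` is elliptic: nontrivial of finite order. -/
def Elliptic (g : Equiv.Perm S1) : Prop := g ≠ 1 ∧ IsOfFinOrder g

/-- `g` is parabolic: it has exactly one fixed point. -/
def Parabolic (g : Equiv.Perm S1) : Prop := ∃! x : S1, g x = x

/-- `g` is hyperbolic: exactly two fixed points, one attracting and one
repelling. -/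
def Hyperbolic (g : Equiv.Perm S1) : Prop :=
  ∃ a b : S1, a ≠ b ∧ FixSet g = {a, b} ∧ IsAttractingFix g a ∧ IsRepellingFix g b

/-- `g` is pseudo-Anosov-like for the pair `(L1, L2)`: nontrivial, neither
elliptic nor parabolic, and preserving both gaps of some interleaving pair. -/
def PAlike (L1 L2 : LamSys) (g : Equiv.Perm S1) : Prop :=
  g ≠ 1 ∧ ¬ Elliptic g ∧ ¬ Parabolic g ∧
  ∃ G1 G2 : Set GoodInt, L1.IsGap G1 ∧ L2.IsGap G2 ∧ Interleave G1 G2 ∧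
    MapsGapOnto g G1 ∧ MapsGapOnto g G2

/-- `g` is properly pseudo-Anosov: pA-like with nonempty fixed point set. -/
def ProperlyPA (L1 L2 : LamSys) (g : Equiv.Perm S1) : Prop :=
  PAlike L1 L2 g ∧ (FixSet g).Nonempty

/-- Two leaves are linked: each of the two complementary components of the
vertex set of one contains a vertex of the other. -/
def LeavesLinked (I J : GoodInt) : Prop :=
  (I.carrier ∩ J.verts).Nonempty ∧ (I.dual.carrier ∩ J.verts).Nonempty

/-- Two gaps are linked: they contain a linked pair of boundary leaves. -/
def GapsLinked (G1 G2 : Set GoodInt) : Prop :=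
  ∃ I1 ∈ G1, ∃ I2 ∈ G2, LeavesLinked I1 I2

/-- Gaps `G1`, `G2` cross: there are distinct pairs `{I₁, J₁} ⊆ G1`,
`{I₂, J₂} ⊆ G2` such that for each `i`, the vertex set of the other gap is
contained in `Iᵢ ∪ Jᵢ` and meets `Iᵢ` in exactly one point. -/
def GapsCross (G1 G2 : Set GoodInt) : Prop :=
  ∃ I1 ∈ G1, ∃ J1 ∈ G1, ∃ I2 ∈ G2, ∃ J2 ∈ G2,
    I1.carrier ⊂ J1.dual.carrier ∧ I2.carrier ⊂ J2.dual.carrier ∧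
    gapVerts G2 ⊆ I1.carrier ∪ J1.carrier ∧
    (∃! x : S1, x ∈ I1.carrier ∩ gapVerts G2) ∧
    gapVerts G1 ⊆ I2.carrier ∪ J2.carrier ∧
    (∃! x : S1, x ∈ I2.carrier ∩ gapVerts G1)

/-- The Baumslag–Solitar group `BS(m,n) = ⟨a, b | b aᵐ b⁻¹ = aⁿ⟩`,
with `a = FreeGroup.of false` and `b = FreeGroup.of true`. -/
abbrev BSGroup (m n : ℤ) : Type :=
  PresentedGroup
    ({FreeGroup.of true * FreeGroup.of false ^ m * (FreeGroup.of true)⁻¹ *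
        (FreeGroup.of false ^ n)⁻¹} : Set (FreeGroup Bool))

/-! ### Arcs of the circle -/

/-- Coordinates on a good interval: lifting the endpoints to real numbers `A < B < A + 1`, its
points are exactly the classes of the reals in `(A, B)`. -/
theorem GoodInt.exists_lift (I : GoodInt) : ∃ A B : ℝ, A < B ∧ B < A + 1 ∧ I.a = (A : S1) ∧
    I.b = (B : S1) ∧ I.carrier = (fun t : ℝ => (t : S1)) '' Ioo A B := by
  obtain ⟨a, b, hne⟩ := I
  obtain ⟨A, rfl⟩ := QuotientAddGroup.mk_surjective a
  have hrep : ∀ z : S1, ∃ t : ℝ, t ∈ Ioc A (A + 1) ∧ (t : S1) = z := fun z =>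
    ⟨_, (QuotientAddGroup.equivIocMod one_pos A z).2,
      (QuotientAddGroup.equivIocMod one_pos A).left_inv z⟩
  obtain ⟨B, ⟨hAB, hBA⟩, rfl⟩ := hrep b
  have hB1 : B < A + 1 := by
    refine lt_of_le_of_ne hBA ?_
    rintro rfl
    apply hne
    simp
  have hB : toIcoMod one_pos A B = B := (toIcoMod_eq_self one_pos).2 ⟨hAB.le, hB1⟩
  have key : ∀ t : ℝ, t ∈ Ioc A (A + 1) → (sbtw (A : S1) (t : S1) (B : S1) ↔ t < B) := by
    intro t ht
    have h1 : btw (A : S1) (B : S1) (t : S1) ↔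
        toIcoMod one_pos A B ≤ toIocMod one_pos A t := QuotientAddGroup.btw_coe_iff
    rw [sbtw_iff_not_btw, btw_cyclic, h1, hB,
      (toIocMod_eq_self one_pos).2 ht, not_le]
  refine ⟨A, B, hAB, hB1, rfl, rfl, ?_⟩
  ext z
  constructor
  · intro hz
    obtain ⟨t, ht, rfl⟩ := hrep z
    exact ⟨t, ⟨ht.1, (key t ht).1 hz⟩, rfl⟩
  · rintro ⟨t, ht, rfl⟩
    exact (key t ⟨ht.1, by linarith [ht.2]⟩).2 ht.2

theorem GoodInt.isOpen_carrier (I : GoodInt) : IsOpen I.carrier := by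
  obtain ⟨A, B, -, -, -, -, h⟩ := I.exists_lift
  rw [h]
  exact QuotientAddGroup.isOpenMap_coe _ isOpen_Ioo

theorem GoodInt.nonempty_carrier (I : GoodInt) : I.carrier.Nonempty := by
  obtain ⟨A, B, hAB, -, -, -, h⟩ := I.exists_lift
  rw [h]
  exact (nonempty_Ioo.2 hAB).image _

theorem GoodInt.endpoints_mem_closure (I : GoodInt) :
    I.a ∈ closure I.carrier ∧ I.b ∈ closure I.carrier := by
  obtain ⟨A, B, hAB, -, ha, hb, h⟩ := I.exists_lift
  have hc : Continuous (fun t : ℝ => (t : S1)) := AddCircle.continuous_mk' 1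
  have := image_closure_subset_closure_image hc (s := Ioo A B)
  rw [closure_Ioo hAB.ne] at this
  rw [h, ha, hb]
  exact ⟨this ⟨A, left_mem_Icc.2 hAB.le, rfl⟩, this ⟨B, right_mem_Icc.2 hAB.le, rfl⟩⟩

/-- A good interval, its two endpoints, and its dual partition the circle. -/
theorem GoodInt.trichotomy (I : GoodInt) (z : S1) :
    z ∈ I.carrier ∨ z ∈ I.dual.carrier ∨ z = I.a ∨ z = I.b := by
  by_cases h1 : sbtw I.a z I.b
  · exact Or.inl h1
  by_cases h2 : sbtw I.b z I.a
  · exact Or.inr (Or.inl h2)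
  rw [sbtw_iff_not_btw, not_not] at h1 h2
  rcases h2.antisymm h1 with h | h | h
  · exact Or.inr (Or.inr (Or.inl h.symm))
  · exact Or.inr (Or.inr (Or.inr h))
  · exact absurd h.symm I.ne

/-- The dual interval is the exterior of the interval; this makes duality compatible with
homeomorphisms without any reference to the circular order. -/
theorem GoodInt.dual_carrier (I : GoodInt) : I.dual.carrier = (closure I.carrier)ᶜ := by
  ext z
  constructor
  · intro hz hcl
    obtain ⟨w, hw1, hw2⟩ := mem_closure_iff.1 hcl _ I.dual.isOpen_carrier hz
    exact sbtw_asymm (show sbtw I.a w I.b from hw2) (show sbtw I.b w I.a from hw1)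
  · intro hz
    rcases I.trichotomy z with h | h | rfl | rfl
    · exact absurd (subset_closure h) hz
    · exact h
    · exact absurd I.endpoints_mem_closure.1 hz
    · exact absurd I.endpoints_mem_closure.2 hz

theorem GoodInt.carrier_eq (I : GoodInt) : I.carrier = (closure I.dual.carrier)ᶜ :=
  I.dual.dual_carrier

theorem GoodInt.disjoint_dual (I : GoodInt) : Disjoint I.carrier I.dual.carrier := by
  rw [I.dual_carrier]
  exact disjoint_compl_right_iff_subset.2 subset_closure

/-- The endpoints are the points outside both the interval and its dual, so a homeomorphism preserving
both intervals permutes them. -/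
theorem GoodInt.mem_pair_iff (I : GoodInt) (z : S1) :
    z ∈ (I.carrier ∪ I.dual.carrier)ᶜ ↔ z = I.a ∨ z = I.b := by
  constructor
  · intro hz
    rcases I.trichotomy z with h | h | h
    · exact absurd (Or.inl h) hz
    · exact absurd (Or.inr h) hz
    · exact h
  · rintro (rfl | rfl) (h | h)
    · exact sbtw_irrefl_left (show sbtw I.a I.a I.b from h)
    · exact sbtw_irrefl_right (show sbtw I.b I.a I.a from h)
    · exact sbtw_irrefl_right (show sbtw I.a I.b I.b from h)
    · exact sbtw_irrefl_left (show sbtw I.b I.b I.a from h)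

/-! ### Powers of an orientation-preserving homeomorphism -/

theorem PosHomeo.symm {g : Equiv.Perm S1} (hg : PosHomeo g) : PosHomeo g⁻¹ := by
  refine ⟨hg.2.1, hg.1, fun x y z h => ?_⟩
  by_contra hn
  rw [sbtw_iff_not_btw, not_not, btw_iff_not_sbtw] at hn
  have hxy : g⁻¹ x ≠ g⁻¹ y := fun e => by
    rw [g⁻¹.injective e] at h; exact sbtw_irrefl_left h
  have hyz : g⁻¹ y ≠ g⁻¹ z := fun e => by
    rw [g⁻¹.injective e] at h; exact sbtw_irrefl_right h
  have hzx : g⁻¹ z ≠ g⁻¹ x := fun e => by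
    rw [g⁻¹.injective e] at h; exact sbtw_irrefl_left_right h
  have hs : sbtw (g⁻¹ z) (g⁻¹ y) (g⁻¹ x) := by
    rw [sbtw_iff_not_btw]
    intro hb
    rcases hb.antisymm (btw_iff_not_sbtw.2 hn) with e | e | e
    exacts [hxy e, hyz e, hzx e]
  have := hg.2.2 _ _ _ hs
  have e : ∀ w, g (g⁻¹ w) = w := g.apply_symm_apply
  rw [e, e, e] at this
  exact sbtw_asymm h this

theorem PosHomeo.pow {g : Equiv.Perm S1} (hg : PosHomeo g) (n : ℕ) : PosHomeo (g ^ n) := by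
  induction n with
  | zero => exact ⟨continuous_id, continuous_id, fun _ _ _ h => h⟩
  | succ n ih =>
    rw [pow_succ]
    exact ⟨ih.1.comp hg.1, hg.2.1.comp ih.2.1, fun x y z h => ih.2.2 _ _ _ (hg.2.2 _ _ _ h)⟩

theorem PosHomeo.zpow {g : Equiv.Perm S1} (hg : PosHomeo g) (n : ℤ) : PosHomeo (g ^ n) := by
  cases n with
  | ofNat n => simpa using hg.pow n
  | negSucc n => rw [zpow_negSucc]; exact (hg.pow _).symm

theorem PosHomeo.image_closure {h : Equiv.Perm S1} (hh : PosHomeo h) (s : Set S1) :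
    h '' closure s = closure (h '' s) :=
  Homeomorph.image_closure ⟨h, hh.1, hh.2.1⟩ s

theorem PosHomeo.image_dual {h : Equiv.Perm S1} (hh : PosHomeo h) {I J : GoodInt}
    (hJ : J.carrier = h '' I.carrier) : J.dual.carrier = h '' I.dual.carrier := by
  rw [J.dual_carrier, I.dual_carrier, image_compl_eq h.bijective, hh.image_closure, hJ]

theorem PosHomeo.image_carrier {h : Equiv.Perm S1} (hh : PosHomeo h) (I : GoodInt) :
    h '' I.carrier = {z | sbtw (h I.a) z (h I.b)} := by
  ext z
  constructor
  · rintro ⟨w, hw, rfl⟩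
    exact hh.2.2 _ _ _ hw
  · intro hz
    refine ⟨h⁻¹ z, ?_, by simp⟩
    have := hh.symm.2.2 _ _ _ hz
    have e : ∀ w, h⁻¹ (h w) = w := h.symm_apply_apply
    rwa [e, e] at this

/-! ### Dynamics of a transitive homeomorphism -/

section Dynamics

variable {g : Equiv.Perm S1}

/-- Recurrence: for a transitive `g`, every nonempty open set meets one of its forward images under
a given nontrivial power `g ^ N`. Infinitely many points of the dense orbit lie in the open set, so
two of them have times congruent modulo `N`. -/
theorem recurrence {x : S1} (hx : Dense (Set.range fun n : ℤ => (g ^ n) x)) {N : ℤ} (hN : N ≠ 0)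
    {U : Set S1} (hU : IsOpen U) (hUne : U.Nonempty) :
    ∃ y ∈ U, ∃ j : ℕ, 0 < j ∧ ((g ^ N) ^ j) y ∈ U ∧ ((g ^ N) ^ j) y ≠ y := by
  have hinf : (U ∩ Set.range fun n : ℤ => (g ^ n) x).Infinite := by
    intro hfin
    have : Nontrivial S1 := by
      have : Nontrivial (Ico (0 : ℝ) (0 + 1)) :=
        ⟨⟨0, by norm_num⟩, ⟨1 / 2, by norm_num⟩, fun e => by
          have := congrArg Subtype.val e
          norm_num at this⟩
      exact (QuotientAddGroup.equivIcoMod (one_pos : (0 : ℝ) < 1) 0).nontrivial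
    obtain ⟨y, hy1, hy2⟩ := (hx.sdiff_finite hfin).inter_open_nonempty U hU hUne
    exact hy2.2 ⟨hy1, hy2.1⟩
  have hmem : ∀ y : S1, y ∈ (U ∩ Set.range fun n : ℤ => (g ^ n) x) →
      ∃ n : ℤ, (g ^ n) x = y := fun y hy => hy.2
  choose! k hk using hmem
  obtain ⟨y, hy, z, hz, hyz, hkk⟩ := hinf.exists_ne_map_eq_of_mapsTo
    (f := fun y => k y % N) (t := Icc 0 |N|)
    (fun y _ => ⟨Int.emod_nonneg _ hN, (Int.emod_lt_abs _ hN).le⟩) (finite_Icc _ _)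
  obtain ⟨t, ht⟩ : N ∣ k z - k y := Int.ModEq.dvd hkk
  have hmove : ∀ t : ℤ, ∀ y z, y ∈ (U ∩ Set.range fun n : ℤ => (g ^ n) x) →
      z ∈ (U ∩ Set.range fun n : ℤ => (g ^ n) x) → k z - k y = N * t →
      ((g ^ N) ^ t) y = z := by
    intro t y z hy hz ht
    have hy' := hk y hy
    rw [← zpow_mul, ← ht]
    nth_rw 2 [← hy']
    rw [← Equiv.Perm.mul_apply, ← zpow_add, sub_add_cancel, hk z hz]
  have h1 := hmove t y z hy hz ht
  have h2 := hmove (-t) z y hz hy (by rw [mul_neg, ← ht]; ring)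
  rcases lt_trichotomy t 0 with h | h | h
  · obtain ⟨j, hj⟩ := Int.eq_ofNat_of_zero_le (a := -t) (by omega)
    rw [hj, zpow_natCast] at h2
    exact ⟨z, hz.1, j, by omega, by rw [h2]; exact hy.1, by rw [h2]; exact hyz⟩
  · rw [h] at h1
    exact absurd (by simpa using h1) hyz
  · obtain ⟨j, rfl⟩ := Int.eq_ofNat_of_zero_le h.le
    rw [zpow_natCast] at h1
    exact ⟨y, hy.1, j, by omega, by rw [h1]; exact hz.1, by rw [h1]; exact hyz.symm⟩

/-- A nontrivial power maps no good interval strictly inside itself: the part of the interval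
outside the closure of its image would be wandering. -/
theorem not_strict_nested (hg : PosHomeo g) {x : S1}
    (hx : Dense (Set.range fun n : ℤ => (g ^ n) x)) {N : ℤ} (hN : N ≠ 0) (I : GoodInt)
    (hsub : ⇑(g ^ N) '' I.carrier ⊆ I.carrier) : ⇑(g ^ N) '' I.carrier = I.carrier := by
  by_contra hne
  have hh := hg.zpow N
  have hVne : (I.carrier ∩ (closure (⇑(g ^ N) '' I.carrier))ᶜ).Nonempty := by
    -- The image is regular open, so it contains every open subset of its closure.
    rw [inter_compl_nonempty_iff]
    intro hcl
    apply hne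
    refine hsub.antisymm ?_
    have himg : (closure (closure (⇑(g ^ N) '' I.carrier))ᶜ)ᶜ = ⇑(g ^ N) '' I.carrier := by
      rw [← hh.image_closure, ← image_compl_eq (g ^ N).bijective, ← I.dual_carrier,
        ← hh.image_closure, ← image_compl_eq (g ^ N).bijective, ← I.carrier_eq]
    rw [← himg, ← interior_eq_compl_closure_compl]
    exact interior_maximal hcl I.isOpen_carrier
  obtain ⟨y, hy, j, hj, hmem, -⟩ := recurrence hx hN
    (I.isOpen_carrier.inter isClosed_closure.isOpen_compl) hVne
  have hiter : ∀ i : ℕ, ((g ^ N) ^ i) y ∈ I.carrier := by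
    intro i
    induction i with
    | zero => exact hy.1
    | succ i ih =>
      rw [pow_succ', Equiv.Perm.mul_apply]
      exact hsub ⟨_, ih, rfl⟩
  obtain ⟨i, rfl⟩ := Nat.exists_eq_succ_of_ne_zero hj.ne'
  apply hmem.2
  rw [Nat.succ_eq_add_one, pow_succ', Equiv.Perm.mul_apply]
  exact subset_closure ⟨_, hiter i, rfl⟩

/-- A transitive orientation-preserving homeomorphism has no periodic point: cutting the circle at
a fixed point `a` of a power `h`, and taking `y` with `h y ≠ y`, the interval `(a, y)` is mapped
strictly inside itself by `h` or by its inverse. -/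
theorem no_periodic (hg : PosHomeo g) {x : S1}
    (hx : Dense (Set.range fun n : ℤ => (g ^ n) x)) {N : ℤ} (hN : N ≠ 0) (a : S1) :
    (g ^ N) a ≠ a := by
  intro ha
  have main : ∀ M : ℤ, M ≠ 0 → (g ^ M) a = a → ∀ y, ¬ sbtw a ((g ^ M) y) y := by
    intro M hM ha y hs
    have hay : a ≠ y := by
      rintro rfl
      exact sbtw_irrefl_left_right hs
    have himg := (hg.zpow M).image_carrier ⟨a, y, hay⟩
    simp only [ha] at himg
    have heq := not_strict_nested hg hx hM ⟨a, y, hay⟩ (by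
      rw [himg]
      intro z hz
      exact sbtw_trans_right (show sbtw a z ((g ^ M) y) from hz) hs)
    have : (g ^ M) y ∈ ⇑(g ^ M) '' GoodInt.carrier ⟨a, y, hay⟩ := by
      rw [heq]; exact hs
    rw [himg] at this
    exact sbtw_irrefl_right (show sbtw a ((g ^ M) y) ((g ^ M) y) from this)
  obtain ⟨y, -, j, -, -, hy⟩ := recurrence hx hN isOpen_univ univ_nonempty
  have hhy : (g ^ N) y ≠ y := fun e => hy (Function.IsFixedPt.perm_pow e j)
  have hay : a ≠ y := by
    rintro rfl
    exact hhy ha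
  rcases GoodInt.trichotomy ⟨a, y, hay⟩ ((g ^ N) y) with h | h | h | h
  · exact main N hN ha y h
  · have h2 : sbtw a y ((g ^ N) y) := SBtw.sbtw.cyclic_right (show sbtw y ((g ^ N) y) a from h)
    have h3 := (hg.zpow N).symm.2.2 _ _ _ h2
    have ha' : (g ^ N)⁻¹ a = a := by
      rw [Equiv.Perm.inv_eq_iff_eq, ha]
    have e : (g ^ N)⁻¹ ((g ^ N) y) = y := (g ^ N).symm_apply_apply y
    rw [ha', e, ← zpow_neg] at h3
    rw [← zpow_neg] at ha'
    exact main (-N) (neg_ne_zero.2 hN) ha' y h3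
  · exact hay (((g ^ N).injective (ha.trans h.symm)))
  · exact hhy h

/-- No nontrivial power of a transitive `g` maps a good interval into itself: the image would have
to be the whole interval, and then the square of that power would fix the endpoints. -/
theorem not_nested (hg : PosHomeo g) {x : S1}
    (hx : Dense (Set.range fun n : ℤ => (g ^ n) x)) {N : ℤ} (hN : N ≠ 0) (I : GoodInt) :
    ¬ ⇑(g ^ N) '' I.carrier ⊆ I.carrier := by
  intro hsub
  have heq := not_strict_nested hg hx hN I hsub
  have hdual := (hg.zpow N).image_dual heq.symm
  have hends : ∀ z, z = I.a ∨ z = I.b → (g ^ N) z = I.a ∨ (g ^ N) z = I.b := by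
    intro z hz
    rw [← I.mem_pair_iff] at hz ⊢
    have : (I.carrier ∪ I.dual.carrier)ᶜ = ⇑(g ^ N) '' (I.carrier ∪ I.dual.carrier)ᶜ := by
      rw [image_compl_eq (g ^ N).bijective, image_union, heq, ← hdual]
    rw [this]
    exact ⟨z, hz, rfl⟩
  have ha := no_periodic hg hx hN I.a
  have hb := no_periodic hg hx hN I.b
  have ha' := (hends I.a (Or.inl rfl)).resolve_left ha
  have hb' := (hends I.b (Or.inr rfl)).resolve_right hb
  apply no_periodic hg hx (N := N + N) (by omega) I.a
  rw [zpow_add, Equiv.Perm.mul_apply, ha', hb']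

theorem LamSys.InAut.exists_image {L : LamSys} (hL : L.InAut g) {I : GoodInt} (hI : I ∈ L.mem)
    (n : ℕ) : ∃ J ∈ L.mem, J.carrier = ⇑(g ^ n) '' I.carrier := by
  induction n with
  | zero => exact ⟨I, hI, by simp⟩
  | succ n ih =>
    obtain ⟨J, hJ, hJI⟩ := ih
    obtain ⟨K, hK, hKJ⟩ := hL.2 J hJ
    exact ⟨K, hK, by rw [hKJ, hJI, image_image, pow_succ']; rfl⟩

end Dynamics

/-- a topologically transitive orientation-preserving
homeomorphism of the circle preserves no lamination system. -/
theorem statement0 (g : Equiv.Perm S1) (hg : PosHomeo g)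
    (htrans : ∃ x : S1, Dense (Set.range fun n : ℤ => (g ^ n) x)) :
    ∀ L : LamSys, ¬ L.InAut g := by
  intro L hL
  obtain ⟨x, hx⟩ := htrans
  obtain ⟨I, hI⟩ := L.nonempty
  have hback : ∀ (K : GoodInt) (n : ℕ), 0 < n → ¬ K.carrier ⊆ ⇑(g ^ n) '' K.carrier := by
    intro K n hn h
    apply not_nested hg hx (N := -(n : ℤ)) (by omega) K
    rintro _ ⟨z, hz, rfl⟩
    obtain ⟨w, hw, rfl⟩ := h hz
    simpa using hw
  -- Unlinkedness of `I` and `g ^ n I`, once the two nested configurations are excluded.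
  have hcases : ∀ n : ℕ, 0 < n → I.dual.carrier ⊆ ⇑(g ^ n) '' I.carrier ∨
      I.carrier ⊆ ⇑(g ^ n) '' I.dual.carrier := by
    intro n hn
    obtain ⟨J, hJ, hJI⟩ := hL.exists_image hI n
    have hJd := (hg.pow n).image_dual hJI
    rcases L.unlinked I hI J hJ with h | h | h | h
    · exact absurd (hJI ▸ h) (hback I n hn)
    · exact Or.inl (hJI ▸ h)
    · exact Or.inr (hJd ▸ h)
    · exact absurd (hJd ▸ h) (hback I.dual n hn)
  have hrec : ∀ K : GoodInt, ∃ n : ℕ, 0 < n ∧ ∃ y ∈ K.carrier, (g ^ n) y ∈ K.carrier := by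
    intro K
    obtain ⟨y, hy, j, hj, h, -⟩ := recurrence hx one_ne_zero K.isOpen_carrier K.nonempty_carrier
    exact ⟨j, hj, y, hy, by simpa using h⟩
  obtain ⟨n, hn, y, hy, hny⟩ := hrec I
  obtain ⟨m, hm, z, hz, hmz⟩ := hrec I.dual
  have hA : I.dual.carrier ⊆ ⇑(g ^ n) '' I.carrier := by
    refine (hcases n hn).resolve_right fun h => ?_
    obtain ⟨w, hw, hwy⟩ := h hny
    rw [(g ^ n).injective hwy] at hw
    exact disjoint_left.1 I.disjoint_dual hy hw
  have hB : I.carrier ⊆ ⇑(g ^ m) '' I.dual.carrier := by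
    refine (hcases m hm).resolve_left fun h => ?_
    obtain ⟨w, hw, hwz⟩ := h hmz
    rw [(g ^ m).injective hwz] at hw
    exact disjoint_left.1 I.disjoint_dual hw hz
  -- `I ⊆ g ^ m I* ⊆ g ^ (m + n) I` is a nested configuration.
  apply hback I (m + n) (by omega)
  refine hB.trans ((image_mono hA).trans ?_)
  rw [image_image, pow_add]
  rfl

end Veering
end

section
/- Let g be an orientation-preserving homeomorphism of the circle S¹ and let 𝓛 be a quite full lamination system with g ∈ Aut(𝓛). Then g has a periodic point, i.e., gⁿ(p) = p for some p ∈ S¹ and some positive integer n. -/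
/-!
Suppose that `g` has no periodic point. Its lift `f` to the line then has an irrational
translation number `τ`, so by Poincaré's theorem there is a continuous monotone degree one map `F`
with `F ∘ f = F + τ` (`exists_continuous_semiconj`).

A leaf whose two endpoints have different images under `F` in the circle would be linked with one
of its images under a power of `g`, because a power of the translation by `τ` is an arbitrarily
small nonzero translation of the circle. Hence every leaf bounds an interval on which `F` is
constant (`LamSys.Lifted.collapsed`).

Two such collapsed intervals are nested or disjoint, and closedness of the lamination system puts
each of them inside a maximal one (`LamSys.Lifted.exists_maxCollapsed`). The maximal collapsed
intervals therefore form a gap (`LamSys.isGap_collapsedGap`). Since `F` is onto, and takes only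
countably many values on nondegenerate intervals of constancy, the vertex set of this gap is
uncountable (`LamSys.not_countable_gapVerts`). Ideal polygons and crowns have countably many
vertices, so the lamination system is not quite full.
-/

open Set Filter Topology

namespace Veering

/-! ### Real lifts of intervals -/

theorem coe_eq_coe_iff {x y : ℝ} : (x : S1) = (y : S1) ↔ ∃ m : ℤ, y = x + m := by
  rw [eq_comm, ← sub_eq_zero, ← AddCircle.coe_sub, AddCircle.coe_eq_zero_iff]
  constructor
  · rintro ⟨m, hm⟩
    exact ⟨m, by simp at hm; linarith⟩
  · rintro ⟨m, rfl⟩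
    exact ⟨m, by simp⟩

theorem coe_add_int (x : ℝ) (m : ℤ) : ((x + m : ℝ) : S1) = (x : S1) :=
  (coe_eq_coe_iff.2 ⟨m, rfl⟩).symm

theorem exists_rep (c : ℝ) (z : S1) : ∃ x : ℝ, c ≤ x ∧ x < c + 1 ∧ (x : S1) = z := by
  obtain ⟨y, rfl⟩ := QuotientAddGroup.mk_surjective z
  refine ⟨y + (-⌊y - c⌋ : ℤ), ?_, ?_, coe_add_int _ _⟩
  · push_cast; linarith [Int.floor_le (y - c)]
  · push_cast; linarith [Int.lt_floor_add_one (y - c)]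

/-- Two reals in a common half-open unit interval with the same class are equal. -/
theorem rep_unique {c x y : ℝ} (hx : c ≤ x) (hx' : x < c + 1) (hy : c ≤ y) (hy' : y < c + 1)
    (h : (x : S1) = (y : S1)) : x = y := by
  obtain ⟨m, hm⟩ := coe_eq_coe_iff.1 h
  have h1 : (m : ℝ) < 1 := by linarith
  have h2 : (-1 : ℝ) < m := by linarith
  have h3 : m < 1 := by exact_mod_cast h1
  have h4 : -1 < m := by exact_mod_cast h2
  have : m = 0 := by omega
  subst this
  simpa using hm.symm

/-- The circular order on `S1` in terms of real representatives. -/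
theorem sbtw_coe_iff {a b : ℝ} (hab : a < b) (hb : b < a + 1) (z : S1) :
    sbtw (a : S1) z (b : S1) ↔ ∃ x : ℝ, a < x ∧ x < b ∧ (x : S1) = z := by
  have key : ∀ x : ℝ, a ≤ x → x < a + 1 → (sbtw (a : S1) (x : S1) (b : S1) ↔ a < x ∧ x < b) := by
    intro x hx hx'
    have hbb : toIcoMod (one_pos : (0 : ℝ) < 1) a b = b :=
      (toIcoMod_eq_iff _).2 ⟨⟨hab.le, hb⟩, 0, by simp⟩
    have e : btw (a : S1) (b : S1) (x : S1) ↔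
        toIcoMod (one_pos : (0 : ℝ) < 1) a b ≤ toIocMod (one_pos : (0 : ℝ) < 1) a x :=
      QuotientAddGroup.btw_coe_iff
    rw [sbtw_iff_not_btw, btw_cyclic, e, hbb, not_le]
    rcases hx.eq_or_lt with rfl | hlt
    · have : toIocMod (one_pos : (0 : ℝ) < 1) a a = a + 1 := by simp
      rw [this]
      exact ⟨fun h => by linarith, fun h => absurd h.1 (lt_irrefl _)⟩
    · have : toIocMod (one_pos : (0 : ℝ) < 1) a x = x :=
        (toIocMod_eq_iff _).2 ⟨⟨hlt, hx'.le⟩, 0, by simp⟩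
      rw [this]
      exact ⟨fun h => ⟨hlt, h⟩, fun h => h.2⟩
  constructor
  · intro h
    obtain ⟨x, h1, h2, rfl⟩ := exists_rep a z
    exact ⟨x, ((key x h1 h2).1 h).1, ((key x h1 h2).1 h).2, rfl⟩
  · rintro ⟨x, h1, h2, rfl⟩
    exact (key x h1.le (by linarith)).2 ⟨h1, h2⟩

/-- The real numbers `a < b < a + 1` represent the endpoints of the good interval `I`, so that
`I` is the image in the circle of the real interval `(a, b)`. -/
def IsLift (I : GoodInt) (a b : ℝ) : Prop :=
  a < b ∧ b < a + 1 ∧ (a : S1) = I.a ∧ (b : S1) = I.b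

theorem IsLift.mem_carrier {I : GoodInt} {a b : ℝ} (h : IsLift I a b) {z : S1} :
    z ∈ I.carrier ↔ ∃ x : ℝ, a < x ∧ x < b ∧ (x : S1) = z := by
  obtain ⟨h1, h2, h3, h4⟩ := h
  rw [← sbtw_coe_iff h1 h2, h3, h4]
  rfl

theorem IsLift.dual {I : GoodInt} {a b : ℝ} (h : IsLift I a b) : IsLift I.dual b (a + 1) := by
  obtain ⟨h1, h2, h3, h4⟩ := h
  refine ⟨h2, by linarith, h4, ?_⟩
  change ((a + 1 : ℝ) : S1) = I.a
  rw [← h3]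
  exact_mod_cast coe_add_int a 1

theorem IsLift.add_int {I : GoodInt} {a b : ℝ} (h : IsLift I a b) (m : ℤ) :
    IsLift I (a + m) (b + m) := by
  obtain ⟨h1, h2, h3, h4⟩ := h
  exact ⟨by linarith, by linarith, by rw [coe_add_int, h3], by rw [coe_add_int, h4]⟩

theorem exists_isLift (I : GoodInt) : ∃ a b : ℝ, IsLift I a b := by
  obtain ⟨a, -, -, ha⟩ := exists_rep 0 I.a
  obtain ⟨b, h1, h2, hb⟩ := exists_rep a I.b
  refine ⟨a, b, lt_of_le_of_ne h1 ?_, h2, ha, hb⟩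
  rintro rfl
  exact I.ne (ha.symm.trans hb)

theorem exists_isLift_of_lt {a b : ℝ} (h1 : a < b) (h2 : b < a + 1) :
    ∃ I : GoodInt, IsLift I a b :=
  ⟨⟨a, b, fun h => h1.ne (rep_unique le_rfl (by linarith) h1.le h2 h)⟩, h1, h2, rfl, rfl⟩

theorem IsLift.left_notMem {I : GoodInt} {a b : ℝ} (h : IsLift I a b) : (a : S1) ∉ I.carrier := by
  rw [h.2.2.1]
  exact sbtw_irrefl_left (α := S1)

theorem IsLift.right_notMem {I : GoodInt} {a b : ℝ} (h : IsLift I a b) : (b : S1) ∉ I.carrier := by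
  rw [h.2.2.2]
  exact sbtw_irrefl_right (α := S1)

theorem goodInt_ext {I J : GoodInt} (h1 : I.a = J.a) (h2 : I.b = J.b) : I = J := by
  cases I; cases J; simp_all

/-- A good interval is determined by its set of points. -/
theorem carrier_injective {I J : GoodInt} (h : I.carrier = J.carrier) : I = J := by
  obtain ⟨a, b, hI⟩ := exists_isLift I
  obtain ⟨a', b', hJ'⟩ := exists_isLift J
  -- The lift of `J` is translated so as to share a point with the lift of `I`.
  have hmid : (((a + b) / 2 : ℝ) : S1) ∈ J.carrier := by
    rw [← h, hI.mem_carrier]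
    exact ⟨_, by linarith [hI.1], by linarith [hI.1], rfl⟩
  obtain ⟨x, hx1, hx2, hx⟩ := hJ'.mem_carrier.1 hmid
  obtain ⟨m, hm⟩ := coe_eq_coe_iff.1 hx
  have hJ := hJ'.add_int m
  have g1 : a' + m < (a + b) / 2 := by linarith
  have g2 : (a + b) / 2 < b' + m := by linarith
  generalize a' + (m : ℝ) = α at *
  generalize b' + (m : ℝ) = β at *
  have hab := hI.1
  have ea : a = α := by
    rcases lt_trichotomy a α with hlt | heq | hlt
    · exact absurd (h ▸ hI.mem_carrier.2 ⟨α, hlt, by linarith, rfl⟩) hJ.left_notMem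
    · exact heq
    · exact absurd (h ▸ hJ.mem_carrier.2 ⟨a, hlt, by linarith, rfl⟩) hI.left_notMem
  have eb : b = β := by
    rcases lt_trichotomy b β with hlt | heq | hlt
    · exact absurd (h ▸ hJ.mem_carrier.2 ⟨b, by linarith, hlt, rfl⟩) hI.right_notMem
    · exact heq
    · exact absurd (h ▸ hI.mem_carrier.2 ⟨β, by linarith, hlt, rfl⟩) hJ.right_notMem
  apply goodInt_ext
  · rw [← hI.2.2.1, ea, hJ.2.2.1]
  · rw [← hI.2.2.2, eb, hJ.2.2.2]

/-- `(a, b)` is a lift of an element of the lamination system `L`. -/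
def LamSys.Lifted (L : LamSys) (a b : ℝ) : Prop := ∃ I ∈ L.mem, IsLift I a b

namespace LamSys

variable {L : LamSys} {a b a' b' : ℝ}

theorem Lifted.lt (h : L.Lifted a b) : a < b := h.choose_spec.2.1

theorem Lifted.lt_add_one (h : L.Lifted a b) : b < a + 1 := h.choose_spec.2.2.1

theorem Lifted.dual (h : L.Lifted a b) : L.Lifted b (a + 1) := by
  obtain ⟨I, hI, h⟩ := h
  exact ⟨I.dual, L.dual_mem I hI, h.dual⟩

theorem Lifted.add_int (h : L.Lifted a b) (m : ℤ) : L.Lifted (a + m) (b + m) := by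
  obtain ⟨I, hI, h⟩ := h
  exact ⟨I, hI, h.add_int m⟩

/-- Unlinkedness, for lifts: the endpoints of two leaves do not alternate. -/
theorem Lifted.not_linked (h : L.Lifted a b) (h' : L.Lifted a' b') (h1 : a < a') (h2 : a' < b)
    (h3 : b < b') (h4 : b' < a + 1) : False := by
  obtain ⟨I, hI, hIl⟩ := h
  obtain ⟨J, hJ, hJl⟩ := h'
  have e1 : (a' : S1) ∈ I.carrier := hIl.mem_carrier.2 ⟨a', h1, h2, rfl⟩
  have e2 : (b' : S1) ∈ I.dual.carrier := hIl.dual.mem_carrier.2 ⟨b', h3, h4, rfl⟩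
  have n1 := hJl.left_notMem
  have n2 := hJl.right_notMem
  have n3 : (b' : S1) ∉ J.dual.carrier := hJl.dual.left_notMem
  have n4 : (a' : S1) ∉ J.dual.carrier := by
    have := hJl.dual.right_notMem
    rwa [show a' + 1 = a' + (1 : ℤ) by simp, coe_add_int] at this
  rcases L.unlinked I hI J hJ with h | h | h | h
  · exact n1 (h e1)
  · exact n2 (h e2)
  · exact n4 (h e1)
  · exact n3 (h e2)

/-- Closedness, for lifts: a limit of an ascending sequence of lifted intervals is a lifted
interval, provided that it is shorter than the whole circle. -/
theorem lifted_of_tendsto {c d : ℕ → ℝ} (hcd : ∀ n, L.Lifted (c n) (d n)) (hc : Antitone c)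
    (hd : Monotone d) (ha : Tendsto c atTop (𝓝 a)) (hb : Tendsto d atTop (𝓝 b))
    (hab : b < a + 1) : L.Lifted a b := by
  have hca : ∀ n, a ≤ c n := fun n => hc.le_of_tendsto ha n
  have hdb : ∀ n, d n ≤ b := fun n => hd.ge_of_tendsto hb n
  have hlt : a < b := (hca 0).trans_lt ((hcd 0).lt.trans_le (hdb 0))
  obtain ⟨J, hJ⟩ := exists_isLift_of_lt hlt hab
  choose I hI hIl using hcd
  refine ⟨J, L.chain_closed I hI ?_ J ?_, hJ⟩
  · intro n z hz
    obtain ⟨x, h1, h2, h3⟩ := (hIl n).mem_carrier.1 hz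
    exact (hIl (n + 1)).mem_carrier.2
      ⟨x, (hc n.le_succ).trans_lt h1, h2.trans_le (hd n.le_succ), h3⟩
  · ext z
    rw [hJ.mem_carrier, mem_iUnion]
    constructor
    · rintro ⟨x, h1, h2, h3⟩
      obtain ⟨n, hn1, hn2⟩ :=
        ((ha.eventually (gt_mem_nhds h1)).and (hb.eventually (lt_mem_nhds h2))).exists
      exact ⟨n, (hIl n).mem_carrier.2 ⟨x, hn1, hn2, h3⟩⟩
    · rintro ⟨n, hn⟩
      obtain ⟨x, h1, h2, h3⟩ := (hIl n).mem_carrier.1 hn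
      exact ⟨x, (hca n).trans_lt h1, h2.trans_le (hdb n), h3⟩

end LamSys

/-! ### Lifting the homeomorphism -/

/-- An orientation-preserving homeomorphism of the circle lifts to a bijective degree one map
of the line. -/
theorem exists_lift {g : Equiv.Perm S1} (hg : PosHomeo g) :
    ∃ f : CircleDeg1Lift, StrictMono f ∧ Function.Surjective f ∧
      ∀ x : ℝ, ((f x : ℝ) : S1) = g (x : S1) := by
  obtain ⟨c, -, -, hc⟩ := exists_rep 0 (g ((0 : ℝ) : S1))
  choose r hr1 hr2 hr3 using exists_rep c
  -- On `[0, 1)` the lift takes the representative of `g x` in `[c, c + 1)`.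
  set f : ℝ → ℝ := fun x => r (g (x : S1)) + ⌊x⌋ with hf
  have hr0 : r (g ((0 : ℝ) : S1)) = c := rep_unique (hr1 _) (hr2 _) le_rfl (by linarith)
    ((hr3 _).trans hc.symm)
  have hcoe : ∀ x : ℝ, ((f x : ℝ) : S1) = g (x : S1) := by
    intro x
    rw [hf]
    simp only
    rw [coe_add_int, hr3]
  have hadd : ∀ (x : ℝ) (m : ℤ), f (x + m) = f x + m := by
    intro x m
    simp only [hf]
    rw [coe_add_int, Int.floor_add_intCast]
    push_cast
    ring
  have hbase : ∀ x y : ℝ, 0 ≤ x → x < y → y < 1 → r (g (x : S1)) < r (g (y : S1)) := by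
    intro x y hx hxy hy
    have hcy : c < r (g (y : S1)) := by
      refine lt_of_le_of_ne (hr1 _) fun h => ?_
      have h' : g ((0 : ℝ) : S1) = g (y : S1) := by rw [← hc, ← hr3 (g (y : S1)), ← h]
      have := rep_unique (c := 0) le_rfl (by linarith) (by linarith) (by linarith)
        (g.injective h')
      linarith
    rcases hx.eq_or_lt with rfl | hx
    · rwa [hr0]
    · have h1 : sbtw ((0 : ℝ) : S1) (x : S1) (y : S1) :=
        (sbtw_coe_iff (by linarith) (by linarith) _).2 ⟨x, hx, hxy, rfl⟩
      have h2 := hg.2.2 _ _ _ h1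
      rw [← hc, ← hr3 (g (y : S1)), sbtw_coe_iff hcy (hr2 _)] at h2
      obtain ⟨w, hw1, hw2, hw3⟩ := h2
      have : r (g (x : S1)) = w := rep_unique (hr1 _) (hr2 _) hw1.le
        (hw2.trans (hr2 _)) ((hr3 _).trans hw3.symm)
      rwa [this]
  have hmono : StrictMono f := by
    intro x y hxy
    rcases (Int.floor_mono hxy.le).eq_or_lt with h | h
    · have hx := Int.floor_le x
      have hy := Int.lt_floor_add_one y
      rw [← h] at hy
      have := hbase (x - ⌊x⌋) (y - ⌊x⌋) (by linarith) (by linarith) (by linarith)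
      have ex : ∀ z : ℝ, ((z - ⌊x⌋ : ℝ) : S1) = (z : S1) := fun z => by
        simp
      rw [ex, ex] at this
      simp only [hf]
      rw [← h]
      linarith
    · have h' : ((⌊x⌋ + 1 : ℤ) : ℝ) ≤ (⌊y⌋ : ℝ) := by exact_mod_cast h
      push_cast at h'
      simp only [hf]
      linarith [hr1 (g (y : S1)), hr2 (g (x : S1))]
  refine ⟨⟨⟨f, hmono.monotone⟩, fun x => by exact_mod_cast hadd x 1⟩, hmono, ?_, hcoe⟩
  intro y
  obtain ⟨x, -, -, hx⟩ := exists_rep 0 (g.symm (y : S1))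
  have : ((f x : ℝ) : S1) = (y : S1) := by rw [hcoe, hx, Equiv.apply_symm_apply]
  obtain ⟨m, hm⟩ := coe_eq_coe_iff.1 this
  exact ⟨x + m, (hadd x m).trans hm.symm⟩

theorem LamSys.Lifted.map {L : LamSys} {g : Equiv.Perm S1} (hg : L.InAut g) {f : CircleDeg1Lift}
    (hf : StrictMono f) (hfs : Function.Surjective f)
    (hfg : ∀ x : ℝ, ((f x : ℝ) : S1) = g (x : S1)) {a b : ℝ} (h : L.Lifted a b) :
    L.Lifted (f a) (f b) := by
  obtain ⟨I, hI, hIl⟩ := h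
  obtain ⟨J, hJ, hJc⟩ := hg.2 I hI
  obtain ⟨K, hK⟩ := exists_isLift_of_lt (hf hIl.1) (by rw [← f.map_add_one]; exact hf hIl.2.1)
  have : K = J := by
    apply carrier_injective
    rw [hJc]
    ext z
    rw [hK.mem_carrier]
    constructor
    · rintro ⟨y, h1, h2, rfl⟩
      obtain ⟨x, rfl⟩ := hfs y
      exact ⟨x, hIl.mem_carrier.2 ⟨x, hf.lt_iff_lt.1 h1, hf.lt_iff_lt.1 h2, rfl⟩, (hfg x).symm⟩
    · rintro ⟨w, hw, rfl⟩
      obtain ⟨x, h1, h2, rfl⟩ := hIl.mem_carrier.1 hw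
      exact ⟨f x, hf h1, hf h2, hfg x⟩
  subst this
  exact ⟨K, hJ, hK⟩

/-- Without periodic points, the translation number of a lift is irrational. -/
theorem irrational_translationNumber {g : Equiv.Perm S1}
    (hper : ¬ ∃ (p : S1) (n : ℕ), 0 < n ∧ (g ^ n) p = p) {f : CircleDeg1Lift} (hf : Continuous f)
    (hfg : ∀ x : ℝ, ((f x : ℝ) : S1) = g (x : S1)) : Irrational f.translationNumber := by
  rintro ⟨q, hq⟩
  rw [Rat.cast_def] at hq
  obtain ⟨x, hx⟩ := (f.translationNumber_eq_rat_iff hf q.pos).1 hq.symm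
  have hiter : ∀ n : ℕ, (((f ^ n) x : ℝ) : S1) = (g ^ n) (x : S1) := by
    intro n
    induction n with
    | zero => simp
    | succ n ih =>
      rw [pow_succ', pow_succ', CircleDeg1Lift.mul_apply, hfg, ih, Equiv.Perm.mul_apply]
  refine hper ⟨x, q.den, q.pos, ?_⟩
  rw [← hiter, hx, coe_add_int]

/-- A lift with irrational translation number `τ` is semiconjugate to the translation by `τ`
through a continuous map: the range of the semiconjugacy is stable under translations by `1`
and `τ`, hence dense. -/
theorem exists_continuous_semiconj {f : CircleDeg1Lift} (hf : StrictMono f)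
    (hfs : Function.Surjective f) (hτ : Irrational f.translationNumber) :
    ∃ F : CircleDeg1Lift, Continuous F ∧ ∀ x, F (f x) = F x + f.translationNumber := by
  set τ := f.translationNumber with hτdef
  set T : CircleDeg1Liftˣ := CircleDeg1Lift.translate (Multiplicative.ofAdd τ) with hT
  obtain ⟨F, hF⟩ := CircleDeg1Lift.semiconj_of_bijective_of_translationNumber_eq
    (f₁ := f) (f₂ := T) ⟨hf.injective, hfs⟩ (CircleDeg1Lift.toOrderIso T).bijective
    (by rw [hT, CircleDeg1Lift.translationNumber_translate])
  have hFf : ∀ x, F (f x) = F x + τ := by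
    intro x
    rw [hF x, hT, CircleDeg1Lift.translate_apply, add_comm]
  refine ⟨F, F.monotone.continuous_of_denseRange ?_, hFf⟩
  have hsub : ∀ z ∈ AddSubgroup.closure {τ, (1 : ℝ)},
      (∀ x, ∃ y, F y = F x + z) ∧ (∀ x, ∃ y, F y = F x - z) := by
    intro z hz
    induction hz using AddSubgroup.closure_induction with
    | mem z hz =>
      rcases hz with rfl | rfl
      · refine ⟨fun x => ⟨f x, hFf x⟩, fun x => ?_⟩
        obtain ⟨y, rfl⟩ := hfs x
        exact ⟨y, by rw [hFf]; ring⟩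
      · exact ⟨fun x => ⟨x + 1, F.map_add_one x⟩, fun x => ⟨x - 1, by
          rw [eq_sub_iff_add_eq, ← F.map_add_one, sub_add_cancel]⟩⟩
    | zero => exact ⟨fun x => ⟨x, by simp⟩, fun x => ⟨x, by simp⟩⟩
    | add u v _ _ hu hv =>
      refine ⟨fun x => ?_, fun x => ?_⟩
      · obtain ⟨y, hy⟩ := hu.1 x
        obtain ⟨w, hw⟩ := hv.1 y
        exact ⟨w, by rw [hw, hy]; ring⟩
      · obtain ⟨y, hy⟩ := hu.2 x
        obtain ⟨w, hw⟩ := hv.2 y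
        exact ⟨w, by rw [hw, hy]; ring⟩
    | neg u _ hu =>
      exact ⟨fun x => by simpa [sub_eq_add_neg] using hu.2 x, fun x => by simpa using hu.1 x⟩
  have hd : Dense (AddSubgroup.closure {τ, (1 : ℝ)} : Set ℝ) :=
    dense_addSubgroupClosure_pair_iff.2 (by simpa using hτ)
  have hd' := hd.vadd (F 0)
  refine hd'.mono ?_
  rintro _ ⟨z, hz, rfl⟩
  obtain ⟨y, hy⟩ := (hsub z hz).1 0
  exact ⟨y, hy⟩

/-! ### Leaves are collapsed by the semiconjugacy -/

/-- Irrational translations move every chord of the circle across itself, so a leaf that is not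
collapsed to a point would be linked with one of its images. -/
theorem LamSys.Lifted.collapsed {L : LamSys} {f F : CircleDeg1Lift} {τ : ℝ} (hτ : Irrational τ)
    (hfL : ∀ a b, L.Lifted a b → L.Lifted (f a) (f b)) (hF : ∀ x, F (f x) = F x + τ)
    {a b : ℝ} (h : L.Lifted a b) : F a = F b ∨ F b = F (a + 1) := by
  by_contra! hne
  have h1 : F a < F b := (F.monotone h.lt.le).lt_of_ne hne.1
  have h2 : F b < F (a + 1) := (F.monotone h.lt_add_one.le).lt_of_ne hne.2
  rw [F.map_add_one] at h2
  -- Dirichlet approximation yields an iterate that moves the values of `F` by a small `ε ≠ 0`.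
  obtain ⟨N, hN⟩ := exists_nat_one_div_lt (lt_min (sub_pos.2 h1) (sub_pos.2 h2))
  obtain ⟨j, k, hk, -, hjk⟩ := Real.exists_int_int_abs_mul_sub_le τ N.succ_pos
  lift k to ℕ using hk.le
  have hk0 : k ≠ 0 := by rintro rfl; simp at hk
  rw [Int.cast_natCast] at hjk
  set ε : ℝ := k * τ - j with hε
  have hε0 : ε ≠ 0 := ((hτ.natCast_mul hk0).sub_intCast j).ne_zero
  have hεlt : |ε| < min (F b - F a) (F a + 1 - F b) := by
    refine hjk.trans_lt (lt_of_le_of_lt ?_ hN)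
    push_cast
    exact one_div_le_one_div_of_le (by positivity) (by linarith)
  obtain ⟨hε1, hε2⟩ := lt_min_iff.1 hεlt
  rw [abs_lt] at hε1 hε2
  have hiter : ∀ n : ℕ, L.Lifted (f^[n] a) (f^[n] b) ∧ ∀ x, F (f^[n] x) = F x + n * τ := by
    intro n
    induction n with
    | zero => exact ⟨h, by simp⟩
    | succ n ih =>
      simp only [Function.iterate_succ_apply']
      refine ⟨hfL _ _ ih.1, fun x => ?_⟩
      rw [hF, ih.2]
      push_cast
      ring
  have h' := (hiter k).1.add_int (-j)
  have hF' : ∀ x, F (f^[k] x + (-j : ℤ)) = F x + ε := by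
    intro x
    rw [F.map_add_int, (hiter k).2, hε]
    push_cast
    ring
  have hlt : ∀ {x y : ℝ}, F x < F y → x < y := fun h => F.monotone.reflect_lt h
  rcases lt_or_gt_of_ne hε0 with hneg | hpos
  · apply h'.not_linked h <;> apply hlt <;> simp only [F.map_add_one, hF'] <;> linarith
  · apply h.not_linked h' <;> apply hlt <;> simp only [F.map_add_one, hF'] <;> linarith

/-- Two collapsed intervals with a common point are nested: a collapsed interval cannot extend
around the circle to the next translate of the other, so the alternative is linking. -/
theorem LamSys.Lifted.nested {L : LamSys} {F : CircleDeg1Lift} {a b a' b' x : ℝ}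
    (h : L.Lifted a b) (h' : L.Lifted a' b') (hF : F a = F b) (hF' : F a' = F b')
    (h1 : a < x) (h2 : x < b) (h1' : a' < x) (h2' : x < b') :
    (a ≤ a' ∧ b' ≤ b) ∨ (a' ≤ a ∧ b ≤ b') := by
  have e1 := F.monotone h1.le
  have e2 := F.monotone h2.le
  have e1' := F.monotone h1'.le
  have e2' := F.monotone h2'.le
  have g1 : b' < a + 1 := F.monotone.reflect_lt (by rw [F.map_add_one]; linarith)
  have g2 : b < a' + 1 := F.monotone.reflect_lt (by rw [F.map_add_one]; linarith)
  by_contra! hc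
  rcases lt_trichotomy a a' with hlt | rfl | hlt
  · exact h.not_linked h' hlt (by linarith) (hc.1 hlt.le) g1
  · linarith [hc.1 le_rfl, hc.2 le_rfl]
  · exact h'.not_linked h hlt (by linarith) (hc.2 hlt.le) g2

/-- `(a, b)` is a lifted interval of `L` on which `F` is constant, and is maximal among these. -/
def LamSys.MaxCollapsed (L : LamSys) (F : CircleDeg1Lift) (a b : ℝ) : Prop :=
  L.Lifted a b ∧ F a = F b ∧
    ∀ a' b', L.Lifted a' b' → F a' = F b' → a' ≤ a → b ≤ b' → a' = a ∧ b' = b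

/-- Every collapsed interval is contained in a maximal one: those containing a given point are
totally ordered by inclusion, and their lengths attain their supremum by closedness of `L`. -/
theorem LamSys.Lifted.exists_maxCollapsed {L : LamSys} {F : CircleDeg1Lift} (hFc : Continuous F)
    {a b : ℝ} (h : L.Lifted a b) (hF : F a = F b) :
    ∃ α β, L.MaxCollapsed F α β ∧ α ≤ a ∧ b ≤ β := by
  obtain ⟨x, hax, hxb⟩ := exists_between h.lt
  set S : Set ℝ := {l | ∃ c d, L.Lifted c d ∧ F c = F d ∧ c < x ∧ x < d ∧ d - c = l} with hS
  have hne : S.Nonempty := ⟨_, a, b, h, hF, hax, hxb, rfl⟩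
  have hbdd : BddAbove S := by
    refine ⟨1, ?_⟩
    rintro _ ⟨c, d, hcd, -, -, -, rfl⟩
    linarith [hcd.lt_add_one]
  obtain ⟨u, hu, hulim, huS⟩ := exists_seq_tendsto_sSup hne hbdd
  choose c d hcd hFcd hcx hxd hlen using huS
  have hnest : ∀ m n, m ≤ n → c n ≤ c m ∧ d m ≤ d n := by
    intro m n hmn
    have hl := hu hmn
    rw [← hlen, ← hlen] at hl
    rcases (hcd m).nested (hcd n) (hFcd m) (hFcd n) (hcx m) (hxd m) (hcx n) (hxd n) with h' | h'
    · exact ⟨by linarith, by linarith⟩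
    · exact h'
  have hc : Antitone c := fun m n hmn => (hnest m n hmn).1
  have hd : Monotone d := fun m n hmn => (hnest m n hmn).2
  have hcb : BddBelow (range c) := by
    refine ⟨x - 1, ?_⟩
    rintro _ ⟨n, rfl⟩
    linarith [(hcd n).lt_add_one, hxd n]
  have hdb : BddAbove (range d) := by
    refine ⟨x + 1, ?_⟩
    rintro _ ⟨n, rfl⟩
    linarith [(hcd n).lt_add_one, hcx n]
  have hcl := tendsto_atTop_ciInf hc hcb
  have hdl := tendsto_atTop_ciSup hd hdb
  set α := ⨅ n, c n
  set β := ⨆ n, d n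
  have hαβ : F α = F β := by
    refine tendsto_nhds_unique ((hFc.tendsto α).comp hcl) (((hFc.tendsto β).comp hdl).congr ?_)
    exact fun n => (hFcd n).symm
  have hlift : L.Lifted α β := LamSys.lifted_of_tendsto hcd hc hd hcl hdl
    (F.monotone.reflect_lt (by rw [F.map_add_one]; linarith))
  have hlength : β - α = sSup S :=
    tendsto_nhds_unique (hdl.sub hcl) (hulim.congr fun n => (hlen n).symm)
  have hαx : α < x := (ciInf_le hcb 0).trans_lt (hcx 0)
  have hxβ : x < β := (hxd 0).trans_le (le_ciSup hdb 0)
  have hmax : ∀ a' b', L.Lifted a' b' → F a' = F b' → a' ≤ α → β ≤ b' → a' = α ∧ b' = β := by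
    intro a' b' h1 h2 h3 h4
    have : b' - a' ≤ sSup S :=
      le_csSup hbdd ⟨a', b', h1, h2, by linarith, by linarith, rfl⟩
    constructor <;> linarith
  refine ⟨α, β, ⟨hlift, hαβ, hmax⟩, ?_⟩
  rcases hlift.nested h hαβ hF hαx hxβ hax hxb with h' | h'
  · exact h'
  · obtain ⟨rfl, rfl⟩ := hmax a b h hF h'.1 h'.2
    exact ⟨le_rfl, le_rfl⟩

/-! ### The gap of maximal collapsed intervals -/

/-- The set of maximal elements of `L` collapsed by `F`. -/
def LamSys.collapsedGap (L : LamSys) (F : CircleDeg1Lift) : Set GoodInt :=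
  {I | I ∈ L.mem ∧ ∃ a b, IsLift I a b ∧ L.MaxCollapsed F a b}

theorem LamSys.isGap_collapsedGap {L : LamSys} {F : CircleDeg1Lift} (hFc : Continuous F)
    (hcol : ∀ a b, L.Lifted a b → F a = F b ∨ F b = F (a + 1)) :
    L.IsGap (L.collapsedGap F) := by
  have hin : ∀ I : GoodInt, ∀ a b, IsLift I a b → L.Lifted a b → F a = F b →
      ∃ J ∈ L.collapsedGap F, I.carrier ⊆ J.carrier := by
    intro I a b hI hab hF
    obtain ⟨α, β, hm, h1, h2⟩ := hab.exists_maxCollapsed hFc hF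
    obtain ⟨J, hJ, hJl⟩ := hm.1
    refine ⟨J, ⟨hJ, α, β, hJl, hm⟩, fun z hz => ?_⟩
    obtain ⟨x, hx1, hx2, hx3⟩ := hI.mem_carrier.1 hz
    exact hJl.mem_carrier.2 ⟨x, by linarith, by linarith, hx3⟩
  refine ⟨fun I hI => hI.1, ?_, ?_⟩
  · rintro I ⟨hI, a, b, hIl, hIm⟩ J ⟨hJ, a', b', hJl, hJm⟩ hIJ
    rw [Set.disjoint_left]
    intro z hzI hzJ
    apply hIJ
    obtain ⟨x, hx1, hx2, rfl⟩ := hIl.mem_carrier.1 hzI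
    obtain ⟨y, hy1, hy2, hy3⟩ := hJl.mem_carrier.1 hzJ
    obtain ⟨m, rfl⟩ := coe_eq_coe_iff.1 hy3
    have hF' : F (a' + m) = F (b' + m) := by
      rw [F.map_add_int, F.map_add_int, hJm.2.1]
    have hab : a = a' + m ∧ b = b' + m := by
      rcases hIm.1.nested (hJm.1.add_int m) hIm.2.1 hF' hx1 hx2 (by linarith) (by linarith)
        with h | h
      · have h0 := hJm.2.2
        -- The maximality of `(a', b')` is applied to the translate of `(a, b)` by `-m`.
        have h1 := hIm.1.add_int (-m)
        have h2 : F (a + (-m : ℤ)) = F (b + (-m : ℤ)) := by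
          rw [F.map_add_int, F.map_add_int, hIm.2.1]
        have := h0 _ _ h1 h2 (by push_cast; linarith) (by push_cast; linarith)
        push_cast at this
        constructor <;> linarith
      · have := hIm.2.2 _ _ (hJm.1.add_int m) hF' h.1 h.2
        exact ⟨this.1.symm, this.2.symm⟩
    apply goodInt_ext
    · rw [← hIl.2.2.1, ← hJl.2.2.1, hab.1, coe_add_int]
    · rw [← hIl.2.2.2, ← hJl.2.2.2, hab.2, coe_add_int]
  · intro I hI
    obtain ⟨a, b, hIl⟩ := exists_isLift I
    have hab : L.Lifted a b := ⟨I, hI, hIl⟩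
    rcases hcol a b hab with h | h
    · obtain ⟨J, hJ, hIJ⟩ := hin I a b hIl hab h
      exact ⟨J, hJ, Or.inl hIJ⟩
    · obtain ⟨J, hJ, hIJ⟩ := hin I.dual b (a + 1) hIl.dual hab.dual h
      exact ⟨J, hJ, Or.inr hIJ⟩

/-- The collapsed intervals contribute only countably many values of the surjection `F`, each
attained at a rational number; the remaining values come from the vertices of the gap. -/
theorem LamSys.not_countable_gapVerts {L : LamSys} {F : CircleDeg1Lift} (hFc : Continuous F) :
    ¬ (gapVerts (L.collapsedGap F)).Countable := by
  intro hV
  have hpre : {x : ℝ | (x : S1) ∈ gapVerts (L.collapsedGap F)}.Countable := by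
    choose r _ _ hr using exists_rep 0
    refine (hV.biUnion fun v _ => countable_range fun m : ℤ => r v + m).mono ?_
    intro x hx
    obtain ⟨m, hm⟩ := coe_eq_coe_iff.1 (hr (x : S1))
    exact mem_biUnion hx ⟨m, hm.symm⟩
  refine Cardinal.not_countable_real (((hpre.image F).union
    ((countable_range ((↑) : ℚ → ℝ)).image F)).mono ?_)
  intro y _
  obtain ⟨x, rfl⟩ := hFc.surjective F.tendsto_atTop F.tendsto_atBot y
  by_cases hx : (x : S1) ∈ gapVerts (L.collapsedGap F)
  · exact Or.inl ⟨x, hx, rfl⟩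
  right
  rw [gapVerts, notMem_compl_iff, mem_iUnion₂] at hx
  obtain ⟨I, ⟨-, a, b, hIl, hIm⟩, hxI⟩ := hx
  obtain ⟨w, hw1, hw2, hw3⟩ := hIl.mem_carrier.1 hxI
  obtain ⟨m, rfl⟩ := coe_eq_coe_iff.1 hw3
  have hconst : ∀ z, a + m < z → z < b + m → F z = F a + m := by
    intro z h1 h2
    have e1 := F.monotone h1.le
    have e2 := F.monotone h2.le
    rw [F.map_add_int] at e1 e2
    linarith [hIm.2.1]
  obtain ⟨q, hq1, hq2⟩ := exists_rat_btwn (show a + m < b + (m : ℝ) by linarith)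
  exact ⟨q, ⟨q, rfl⟩, 
    (hconst q hq1 hq2).trans (hconst _ (by linarith) (by linarith)).symm⟩

/-- an automorphism of a quite full lamination system has a
periodic point. -/
theorem statement1 (L : LamSys) (hqf : L.QuiteFull)
    (g : Equiv.Perm S1) (hg : L.InAut g) :
    ∃ (p : S1) (n : ℕ), 0 < n ∧ (g ^ n) p = p := by
  by_contra hper
  obtain ⟨f, hf, hfs, hfg⟩ := exists_lift hg.1
  have hτ := irrational_translationNumber hper (hf.monotone.continuous_of_surjective hfs) hfg
  obtain ⟨F, hFc, hF⟩ := exists_continuous_semiconj hf hfs hτ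
  have hgap : L.IsGap (L.collapsedGap F) := LamSys.isGap_collapsedGap hFc fun a b h =>
    h.collapsed hτ (fun _ _ h => h.map hg hf hfs hfg) hF
  apply LamSys.not_countable_gapVerts (L := L) hFc
  rcases hqf _ hgap with hfin | ⟨t, p, -, -, -, hV⟩
  · exact hfin.countable
  · rw [hV]
    exact (countable_range t).union (countable_singleton p)

end Veering
end

section
/- The endpoint set E(𝓛) of a quite full lamination system 𝓛 is dense in S¹. -/
/-!
If an open arc `U` around `p` misses `E(𝓛)`, then for each leaf exactly one of its two sides is
disjoint from `U`. Unlinkedness makes any two such sides nested or disjoint, and closedness under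
ascending unions puts every one of them inside a maximal one (`exists_maximal`). Hence the maximal
sides form a gap (`isGap_maximalSides`), whose vertex set contains `U` and so is uncountable.
The vertex set of an ideal polygon is finite and that of a crown is countable, so `𝓛` is not
quite full.

All order arguments take place in `ℝ`, by cutting the circle open at `p`.
-/

open Set Filter Topology

namespace Veering

/-! ### The circle cut open at a point -/

/-- The coordinate on the circle cut open at `p`: the representative of `x` in `[p, p + 1)`. -/
noncomputable def coord (p : ℝ) (x : S1) : ℝ := (AddCircle.equivIco (1 : ℝ) p x : ℝ)

lemma coord_mem (p : ℝ) (x : S1) : p ≤ coord p x ∧ coord p x < p + 1 :=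
  (AddCircle.equivIco (1 : ℝ) p x).2

lemma coe_coord (p : ℝ) (x : S1) : ((coord p x : ℝ) : S1) = x :=
  AddCircle.coe_equivIco

lemma coord_coe {p t : ℝ} (h1 : p ≤ t) (h2 : t < p + 1) : coord p (t : S1) = t :=
  AddCircle.equivIco_coe_of_mem ⟨h1, h2⟩

lemma coord_inj {p : ℝ} {x y : S1} (h : coord p x = coord p y) : x = y := by
  rw [← coe_coord p x, h, coe_coord]

lemma toIcoMod_of_mem {p x y : ℝ} (hx : p ≤ x ∧ x < p + 1) (hy : p ≤ y ∧ y < p + 1) :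
    toIcoMod (zero_lt_one (α := ℝ)) x y = if x ≤ y then y else y + 1 := by
  split_ifs with h
  · exact (toIcoMod_eq_self _).2 ⟨h, by linarith⟩
  · rw [← toIcoMod_add_right]
    exact (toIcoMod_eq_self _).2 ⟨by linarith, by linarith⟩

lemma toIocMod_of_mem {p x y : ℝ} (hx : p ≤ x ∧ x < p + 1) (hy : p ≤ y ∧ y < p + 1) :
    toIocMod (zero_lt_one (α := ℝ)) x y = if x < y then y else y + 1 := by
  split_ifs with h
  · exact (toIocMod_eq_self _).2 ⟨h, by linarith⟩
  · rw [← toIocMod_add_right]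
    exact (toIocMod_eq_self _).2 ⟨by linarith, by linarith⟩

lemma sbtw_iff_coord (p : ℝ) (x y z : S1) :
    sbtw x y z ↔ (coord p x < coord p y ∧ coord p y < coord p z) ∨
      (coord p y < coord p z ∧ coord p z < coord p x) ∨
      (coord p z < coord p x ∧ coord p x < coord p y) := by
  have hx := coord_mem p x
  have hy := coord_mem p y
  have hz := coord_mem p z
  have key : btw z y x ↔ toIcoMod (zero_lt_one (α := ℝ)) (coord p z) (coord p y) ≤
      toIocMod (zero_lt_one (α := ℝ)) (coord p z) (coord p x) := by
    conv_lhs => rw [← coe_coord p x, ← coe_coord p y, ← coe_coord p z]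
    exact QuotientAddGroup.btw_coe_iff
  rw [sbtw_iff_not_btw, key, toIcoMod_of_mem hz hy, toIocMod_of_mem hz hx]
  split_ifs <;> grind

lemma mem_carrier_iff {p : ℝ} {I : GoodInt} (hI : coord p I.a < coord p I.b) (z : S1) :
    z ∈ I.carrier ↔ coord p I.a < coord p z ∧ coord p z < coord p I.b := by
  change sbtw I.a z I.b ↔ _
  rw [sbtw_iff_coord p]
  grind

lemma mem_dual_carrier_iff {p : ℝ} {I : GoodInt} (hI : coord p I.a < coord p I.b) (z : S1) :
    z ∈ I.dual.carrier ↔ coord p z < coord p I.a ∨ coord p I.b < coord p z := by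
  change sbtw I.b z I.a ↔ _
  rw [sbtw_iff_coord p]
  grind

/-! ### Sides of leaves away from the cut -/

/-- The sides of leaves of `L` that do not cross the cut at `p`. When `p` is not an endpoint,
exactly one side of each leaf is of this kind, namely the one not containing `p`. -/
def sides (L : LamSys) (p : ℝ) : Set GoodInt := {I | I ∈ L.mem ∧ coord p I.a < coord p I.b}

/-- Inclusion of intervals of `sides L p`, in terms of the coordinates of their endpoints. -/
def CoordLE (p : ℝ) (I J : GoodInt) : Prop :=
  coord p J.a ≤ coord p I.a ∧ coord p I.b ≤ coord p J.b

lemma CoordLE.trans {p : ℝ} {I J K : GoodInt} (h : CoordLE p I J) (h' : CoordLE p J K) :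
    CoordLE p I K := ⟨h'.1.trans h.1, h.2.trans h'.2⟩

lemma CoordLE.antisymm {p : ℝ} {I J : GoodInt} (h : CoordLE p I J) (h' : CoordLE p J I) :
    I = J := by
  have ha := coord_inj (le_antisymm h'.1 h.1)
  have hb := coord_inj (le_antisymm h.2 h'.2)
  cases I; cases J; simp_all

lemma CoordLE.subset {p : ℝ} {I J : GoodInt} (hI : coord p I.a < coord p I.b)
    (h : CoordLE p I J) : I.carrier ⊆ J.carrier := by
  have hJ : coord p J.a < coord p J.b := h.1.trans_lt (hI.trans_le h.2)
  intro z hz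
  rw [mem_carrier_iff hI] at hz
  rw [mem_carrier_iff hJ]
  exact ⟨h.1.trans_lt hz.1, hz.2.trans_le h.2⟩

/-- Closing up the second interval is what lets this apply to complements of dual intervals. -/
lemma coordLE_of_subset {p : ℝ} {I J : GoodInt} (hI : coord p I.a < coord p I.b)
    (h : ∀ z ∈ I.carrier, coord p J.a ≤ coord p z ∧ coord p z ≤ coord p J.b) :
    CoordLE p I J := by
  have hsub : Ioo (coord p I.a) (coord p I.b) ⊆ Icc (coord p J.a) (coord p J.b) := by
    intro t ht
    have hc : coord p (t : S1) = t :=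
      coord_coe ((coord_mem p I.a).1.trans ht.1.le) (ht.2.trans (coord_mem p I.b).2)
    have := h (t : S1) ((mem_carrier_iff hI _).2 (by rw [hc]; exact ht))
    rwa [hc] at this
  have := closure_minimal hsub isClosed_Icc
  rw [closure_Ioo hI.ne] at this
  exact (Icc_subset_Icc_iff hI.le).1 this

/-- Unlinkedness in coordinates: two sides away from an endpoint-free cut are nested or
disjoint. -/
lemma nested_or_disjoint {L : LamSys} {p : ℝ} (hp : ∀ x ∈ L.E, p < coord p x)
    {I J : GoodInt} (hI : I ∈ sides L p) (hJ : J ∈ sides L p) :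
    CoordLE p I J ∨ CoordLE p J I ∨ Disjoint I.carrier J.carrier := by
  have hpc : coord p (p : S1) = p := coord_coe le_rfl (by linarith)
  have hIa : p < coord p I.a := hp _ (mem_biUnion hI.1 (by simp [GoodInt.verts]))
  have hJa : p < coord p J.a := hp _ (mem_biUnion hJ.1 (by simp [GoodInt.verts]))
  rcases L.unlinked I hI.1 J hJ.1 with h | h | h | h
  · left
    refine coordLE_of_subset hI.2 fun z hz => ?_
    have := (mem_carrier_iff hJ.2 z).1 (h hz)
    exact ⟨this.1.le, this.2.le⟩
  · have h1 : (p : S1) ∈ I.dual.carrier := (mem_dual_carrier_iff hI.2 _).2 (by rw [hpc]; exact .inl hIa)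
    have := (mem_carrier_iff hJ.2 _).1 (h h1)
    rw [hpc] at this
    linarith [this.1]
  · right; right
    rw [Set.disjoint_left]
    intro z hz hz'
    have h1 := (mem_dual_carrier_iff hJ.2 z).1 (h hz)
    have h2 := (mem_carrier_iff hJ.2 z).1 hz'
    grind
  · right; left
    refine coordLE_of_subset hJ.2 fun z hz => ?_
    have h2 := (mem_carrier_iff hJ.2 z).1 hz
    by_contra hc
    have h1 : z ∈ I.dual.carrier := (mem_dual_carrier_iff hI.2 z).2 (by grind)
    have := (mem_dual_carrier_iff hJ.2 z).1 (h h1)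
    grind

lemma carrier_nonempty {p : ℝ} {I : GoodInt} (hI : coord p I.a < coord p I.b) :
    I.carrier.Nonempty := by
  obtain ⟨t, h1, h2⟩ := exists_between hI
  refine ⟨(t : S1), (mem_carrier_iff hI _).2 ?_⟩
  rw [coord_coe ((coord_mem p I.a).1.trans h1.le) (h2.trans (coord_mem p I.b).2)]
  exact ⟨h1, h2⟩

/-! ### Maximal sides and the gap they form -/

/-- Ascending sequences of sides have an upper bound among the sides, by closedness of `L`. The
gap `ε` between the endpoints and the cut keeps the limit interval from closing up at `p`. -/
lemma exists_upperBound {L : LamSys} {p ε : ℝ} (hε : 0 < ε)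
    (hE : ∀ x ∈ L.E, p + ε ≤ coord p x ∧ coord p x ≤ p + 1 - ε)
    (c : ℕ → GoodInt) (hc : ∀ n, c n ∈ sides L p) (hmono : ∀ n, CoordLE p (c n) (c (n + 1))) :
    ∃ J ∈ sides L p, ∀ n, CoordLE p (c n) J := by
  have hanti : Antitone fun n => coord p (c n).a := antitone_nat_of_succ_le fun n => (hmono n).1
  have hmon : Monotone fun n => coord p (c n).b := monotone_nat_of_le_succ fun n => (hmono n).2
  have hA : ∀ n, p + ε ≤ coord p (c n).a := fun n =>
    (hE _ (mem_biUnion (hc n).1 (by simp [GoodInt.verts]))).1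
  have hB : ∀ n, coord p (c n).b ≤ p + 1 - ε := fun n =>
    (hE _ (mem_biUnion (hc n).1 (by simp [GoodInt.verts]))).2
  have hbdA : BddBelow (range fun n => coord p (c n).a) := ⟨p + ε, by rintro _ ⟨n, rfl⟩; exact hA n⟩
  have hbdB : BddAbove (range fun n => coord p (c n).b) :=
    ⟨p + 1 - ε, by rintro _ ⟨n, rfl⟩; exact hB n⟩
  set a := ⨅ n, coord p (c n).a with ha
  set b := ⨆ n, coord p (c n).b with hb
  have ha' : ∀ n, a ≤ coord p (c n).a := fun n => ciInf_le hbdA n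
  have hb' : ∀ n, coord p (c n).b ≤ b := fun n => le_ciSup hbdB n
  have hpa : p + ε ≤ a := le_ciInf hA
  have hpb : b ≤ p + 1 - ε := ciSup_le hB
  have hab : a < b := (ha' 0).trans_lt ((hc 0).2.trans_le (hb' 0))
  have hca : coord p (a : S1) = a := coord_coe (by linarith) (by linarith)
  have hcb : coord p (b : S1) = b := coord_coe (by linarith) (by linarith)
  let J : GoodInt := ⟨(a : S1), (b : S1), fun h => by
    have := congrArg (coord p) h
    rw [hca, hcb] at this
    exact hab.ne this⟩
  have hJ : coord p J.a < coord p J.b := by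
    change coord p (a : S1) < coord p (b : S1)
    rwa [hca, hcb]
  have hle : ∀ n, CoordLE p (c n) J := fun n =>
    ⟨by change coord p (a : S1) ≤ _; rw [hca]; exact ha' n,
      by change _ ≤ coord p (b : S1); rw [hcb]; exact hb' n⟩
  refine ⟨J, ⟨L.chain_closed c (fun n => (hc n).1) (fun n => (hmono n).subset (hc n).2) J ?_, hJ⟩,
    hle⟩
  apply Subset.antisymm
  · intro z hz
    have hz' := (mem_carrier_iff hJ z).1 hz
    change coord p (a : S1) < _ ∧ _ < coord p (b : S1) at hz'
    rw [hca, hcb] at hz'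
    obtain ⟨m, hm⟩ := exists_lt_of_ciInf_lt hz'.1
    obtain ⟨n, hn⟩ := exists_lt_of_lt_ciSup hz'.2
    refine mem_iUnion.2 ⟨max m n, (mem_carrier_iff (hc _).2 z).2 ⟨?_, ?_⟩⟩
    · exact (hanti (le_max_left m n)).trans_lt hm
    · exact hn.trans_le (hmon (le_max_right m n))
  · exact iUnion_subset fun n => (hle n).subset (hc n).2

/-- The sides that are maximal under inclusion. -/
def maximalSides (L : LamSys) (p : ℝ) : Set GoodInt :=
  {J | J ∈ sides L p ∧ ∀ K ∈ sides L p, CoordLE p J K → K = J}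

/-- The sides above a given one are totally ordered, and their order is that of their lengths;
so a sequence whose lengths increase to the supremum is ascending, and its upper bound is
maximal. -/
lemma exists_maximal {L : LamSys} {p ε : ℝ} (hε : 0 < ε)
    (hE : ∀ x ∈ L.E, p + ε ≤ coord p x ∧ coord p x ≤ p + 1 - ε)
    {I : GoodInt} (hI : I ∈ sides L p) : ∃ J ∈ maximalSides L p, CoordLE p I J := by
  let len : GoodInt → ℝ := fun K => coord p K.b - coord p K.a
  let T : Set GoodInt := {K | K ∈ sides L p ∧ CoordLE p I K}
  have hT : (len '' T).Nonempty := ⟨_, I, ⟨hI, le_rfl, le_rfl⟩, rfl⟩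
  have hbd : BddAbove (len '' T) := by
    refine ⟨1, ?_⟩
    rintro _ ⟨K, -, rfl⟩
    change coord p K.b - coord p K.a ≤ 1
    linarith [(coord_mem p K.a).1, (coord_mem p K.b).2]
  have hcomp : ∀ K ∈ T, ∀ K' ∈ T, len K ≤ len K' → CoordLE p K K' := by
    intro K hK K' hK' hlen
    have hp : ∀ x ∈ L.E, p < coord p x := fun x hx => by linarith [(hE x hx).1]
    rcases nested_or_disjoint hp hK.1 hK'.1 with h | h | h
    · exact h
    · change coord p K.b - coord p K.a ≤ coord p K'.b - coord p K'.a at hlen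
      exact ⟨by linarith [h.1, h.2], by linarith [h.1, h.2]⟩
    · obtain ⟨z, hz⟩ := carrier_nonempty hI.2
      exact absurd (hK'.2.subset hI.2 hz) (Set.disjoint_left.1 h (hK.2.subset hI.2 hz))
  obtain ⟨u, hu, hlim, hmem⟩ := exists_seq_tendsto_sSup hT hbd
  choose c hcT hcu using hmem
  obtain ⟨J, hJ, hcJ⟩ := exists_upperBound hε hE c (fun n => (hcT n).1) fun n =>
    hcomp _ (hcT n) _ (hcT (n + 1)) (by rw [hcu, hcu]; exact hu (Nat.le_succ n))
  have hIJ : CoordLE p I J := (hcT 0).2.trans (hcJ 0)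
  have hsup : sSup (len '' T) ≤ len J := by
    refine le_of_tendsto' hlim fun n => ?_
    rw [← hcu n]
    change coord p (c n).b - coord p (c n).a ≤ coord p J.b - coord p J.a
    linarith [(hcJ n).1, (hcJ n).2]
  refine ⟨J, ⟨hJ, fun K hK hJK => ?_⟩, hIJ⟩
  have hKT : K ∈ T := ⟨hK, hIJ.trans hJK⟩
  exact (hcomp K hKT J ⟨hJ, hIJ⟩ ((le_csSup hbd ⟨K, hKT, rfl⟩).trans hsup)).antisymm hJK

lemma isGap_maximalSides {L : LamSys} {p ε : ℝ} (hε : 0 < ε)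
    (hE : ∀ x ∈ L.E, p + ε ≤ coord p x ∧ coord p x ≤ p + 1 - ε) :
    L.IsGap (maximalSides L p) := by
  have hp : ∀ x ∈ L.E, p < coord p x := fun x hx => by linarith [(hE x hx).1]
  refine ⟨fun I hI => hI.1.1, fun I hI J hJ hne => ?_, fun I hI => ?_⟩
  · rcases nested_or_disjoint hp hI.1 hJ.1 with h | h | h
    · exact absurd (hI.2 J hJ.1 h).symm hne
    · exact absurd (hJ.2 I hI.1 h) hne
    · exact h
  · rcases lt_trichotomy (coord p I.a) (coord p I.b) with h | h | h
    · obtain ⟨J, hJ, hIJ⟩ := exists_maximal hε hE (I := I) ⟨hI, h⟩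
      exact ⟨J, hJ, .inl (hIJ.subset h)⟩
    · exact absurd (coord_inj h) I.ne
    · obtain ⟨J, hJ, hIJ⟩ := exists_maximal hε hE (I := I.dual) ⟨L.dual_mem I hI, h⟩
      exact ⟨J, hJ, .inr (hIJ.subset h)⟩

/-! ### Density of the endpoint set -/

lemma gapVerts_countable {L : LamSys} (hqf : L.QuiteFull) {G : Set GoodInt} (hG : L.IsGap G) :
    (gapVerts G).Countable := by
  rcases hqf G hG with h | ⟨t, p, -, -, -, h⟩
  · exact h.countable
  · rw [h]
    exact (countable_range t).union (countable_singleton p)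

/-- A point outside the closure of `E(𝓛)` has a lift `p` such that all endpoints stay a definite
distance away from both ends of `[p, p + 1)`. -/
lemma exists_coord_gap {L : LamSys} (h : ¬ Dense L.E) :
    ∃ p ε : ℝ, 0 < ε ∧ ∀ x ∈ L.E, p + ε ≤ coord p x ∧ coord p x ≤ p + 1 - ε := by
  simp only [Dense, not_forall] at h
  obtain ⟨q, hq⟩ := h
  obtain ⟨p, rfl⟩ := QuotientAddGroup.mk_surjective q
  have hopen : IsOpen {t : ℝ | (t : S1) ∈ (closure L.E)ᶜ} :=
    isClosed_closure.isOpen_compl.preimage (AddCircle.continuous_mk' 1)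
  obtain ⟨ε, hε, hball⟩ := Metric.isOpen_iff.1 hopen p hq
  refine ⟨p, ε, hε, fun x hx => ?_⟩
  have far : ∀ t : ℝ, (t : S1) = x → ε ≤ |t - p| := by
    intro t ht
    by_contra hlt
    have : t ∈ Metric.ball p ε := by
      rw [Metric.mem_ball, Real.dist_eq]
      exact not_le.1 hlt
    have h2 : (t : S1) ∉ closure L.E := hball this
    exact h2 (ht ▸ subset_closure hx)
  have h0 := coord_mem p x
  have h1 := far _ (coe_coord p x)
  -- `coord p x - 1` is the representative of `x` in `[p - 1, p)`, bounding `x` away from `p + 1`.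
  have h2 := far (coord p x - 1) (by
    rw [AddCircle.coe_sub, coe_coord, AddCircle.coe_period, sub_zero])
  rw [abs_of_nonneg (by linarith)] at h1
  rw [abs_of_neg (by linarith)] at h2
  exact ⟨by linarith, by linarith⟩

/-- the endpoint set of a quite full lamination system is dense
in the circle. -/
theorem statement3 (L : LamSys) (hqf : L.QuiteFull) : Dense L.E := by
  by_contra hd
  obtain ⟨p, ε, hε, hE⟩ := exists_coord_gap hd
  have hcount := (gapVerts_countable hqf (isGap_maximalSides hε hE)).image (coord p)
  have hsub : Ioo p (p + min ε 1) ⊆ coord p '' gapVerts (maximalSides L p) := by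
    intro t ht
    have h1 : t < p + ε := ht.2.trans_le (by linarith [min_le_left ε 1])
    have h2 : t < p + 1 := ht.2.trans_le (by linarith [min_le_right ε 1])
    have hc := coord_coe ht.1.le h2
    refine ⟨(t : S1), ?_, hc⟩
    simp only [gapVerts, mem_compl_iff, mem_iUnion, not_exists]
    intro I hI hz
    have hz' := ((mem_carrier_iff hI.1.2 _).1 hz).1
    rw [hc] at hz'
    linarith [(hE I.a (mem_biUnion hI.1.1 (by simp [GoodInt.verts]))).1]
  have hIoo := Cardinal.le_aleph0_iff_set_countable.2 (hcount.mono hsub)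
  rw [Cardinal.mk_Ioo_real (by linarith [lt_min hε one_pos])] at hIoo
  exact Cardinal.aleph0_lt_continuum.not_ge hIoo

end Veering
end
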